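/- Let q be an odd prime power and F = F_q, and suppose −1 is a square in F. Then there exist g ∈ SL(2,F) with g({a_∞, a_0, a_1}) = {a_∞, a_0, a_1} and a point a_λ ∈ A^□ such that g(a_λ) ∈ A^◇; that is, the setwise stabilizer of {a_∞, a_0, a_1} in SL(2,F) contains an element mapping some element of A^□ onto an element of A^◇. -/

import Mathlib

/-- `SL(2,F)`. -/
abbrev SL2 (F : Type*) [Field F] := Matrix.SpecialLinearGroup (Fin 2) F

/-- The action of `g ∈ SL(2,F)` on subspaces of `F²`, through its linear action on `F²`. -/
def pgact (F : Type*) [Field F] (g : SL2 F) (W : Submodule F (Fin 2 → F)) :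
    Submodule F (Fin 2 → F) :=
  Submodule.map (Matrix.toLin' (g : Matrix (Fin 2) (Fin 2) F)) W

/-- The point `⟨x⟩` of `PG(1,F)`. -/
def ptv (F : Type*) [Field F] (x : Fin 2 → F) : Submodule F (Fin 2 → F) :=
  Submodule.span F {x}

/-- The point `a_∞ = ⟨(1,0)⟩` of `PG(1,F)`. -/
def aInfty (F : Type*) [Field F] : Submodule F (Fin 2 → F) := ptv F ![1, 0]

/-- The point `a_λ = ⟨(λ,1)⟩` of `PG(1,F)`. -/
def aPt (F : Type*) [Field F] (l : F) : Submodule F (Fin 2 → F) := ptv F ![l, 1]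

/-- `A^□ = {a_λ : λ a nonzero square}`. -/
def ASq (F : Type*) [Field F] : Set (Submodule F (Fin 2 → F)) :=
  {W | ∃ l : F, l ≠ 0 ∧ IsSquare l ∧ W = aPt F l}

/-- `A^◇ = {a_λ : λ a non-square}`. -/
def ANSq (F : Type*) [Field F] : Set (Submodule F (Fin 2 → F)) :=
  {W | ∃ l : F, ¬ IsSquare l ∧ W = aPt F l}

theorem pgact_ptv (F : Type*) [Field F] (g : SL2 F) (x y : Fin 2 → F) (c : F) (hc : c ≠ 0)
    (h : (g : Matrix (Fin 2) (Fin 2) F).mulVec x = c • y) : pgact F g (ptv F x) = ptv F y := by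
  unfold pgact ptv
  rw [Submodule.map_span, Set.image_singleton, Matrix.toLin'_apply, h]
  exact Submodule.span_singleton_smul_eq (IsUnit.mk0 c hc) y

/-- Let `q` be an odd prime power, `F = F_q` (formalized: `F` a finite field
of odd cardinality), and suppose `−1` is a square in `F`.  Then the setwise stabilizer of
`{a_∞, a_0, a_1}` in `SL(2,F)` contains an element mapping some element of `A^□` onto an
element of `A^◇`. -/
theorem statement12 (F : Type) [Field F] [Fintype F] (hodd : Odd (Fintype.card F))
    (hsq : IsSquare (-1 : F)) :
    ∃ g : SL2 F,
      pgact F g '' {aInfty F, aPt F 0, aPt F 1} = {aInfty F, aPt F 0, aPt F 1} ∧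
      ∃ l : F, l ≠ 0 ∧ IsSquare l ∧ pgact F g (aPt F l) ∈ ANSq F := by
  obtain ⟨i, hi⟩ := hsq
  have hchar : ringChar F ≠ 2 := by
    intro h
    have := FiniteField.even_card_of_char_two h
    rcases hodd with ⟨k, hk⟩
    omega
  have h2 : (2 : F) ≠ 0 := Ring.two_ne_zero hchar
  obtain ⟨n, hn⟩ := FiniteField.exists_nonsquare hchar
  have hi0 : i ≠ 0 := by
    rintro rfl
    simp at hi
  have hu : n + 1 ≠ 0 := by
    intro h
    exact hn ⟨i, by rw [← hi]; linear_combination h⟩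
  have hv : n - 1 ≠ 0 := by
    intro h
    exact hn ⟨1, by linear_combination h⟩
  let g : SL2 F := ⟨!![-i, i; 0, i], by rw [Matrix.det_fin_two_of]; linear_combination hi⟩
  have hpt : ∀ l : F, pgact F g (aPt F l) = aPt F (1 - l) := by
    intro l
    apply pgact_ptv F g _ _ i hi0
    ext j
    fin_cases j <;> simp [g, Matrix.mulVec, dotProduct, Fin.sum_univ_two]
    ring
  have hinf : pgact F g (aInfty F) = aInfty F := by
    apply pgact_ptv F g _ _ (-i) (neg_ne_zero.mpr hi0)
    ext j
    fin_cases j <;> simp [g, Matrix.mulVec, dotProduct, Fin.sum_univ_two]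
  refine ⟨g, ?_, ((n - 1) / (n + 1)) ^ 2, pow_ne_zero _ (div_ne_zero hv hu), IsSquare.sq _, ?_⟩
  · rw [Set.image_insert_eq, Set.image_pair, hinf, hpt, hpt, sub_zero, sub_self,
      Set.pair_comm (aPt F 1)]
  · rw [hpt]
    refine ⟨_, ?_, rfl⟩
    rintro ⟨r, hr⟩
    apply hn
    refine ⟨r * (n + 1) / 2, ?_⟩
    field_simp at hr ⊢
    linear_combination hr
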